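/- arXiv:0810.3864 — 8 statements merged into one kernel-verified Lean document; each statement's English description precedes it below -/
import Mathlib

section
/- Let K be an algebraically closed field, let G be an n×n matrix over K, and suppose the characteristic polynomial of G factors as ∏_{i=1}^{m} (X − λ_i)^{p_i} where λ_1, …, λ_m ∈ K are pairwise distinct and p_1, …, p_m ≥ 1. If t > m, then det M_{t,l}(G) = 0 for every integer l ≥ 0. -/
open Polynomial Matrix

/-- If some power of `f` is a multiple of the characteristic polynomial of `G`, then every matrix
`G ^ k * f(G)` is nilpotent, hence traceless. -/
theorem trace_pow_mul_aeval_eq_zero {K ι : Type*} [Field K] [Fintype ι] [DecidableEq ι]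
    (G : Matrix ι ι K) {f : K[X]} {N : ℕ} (hf : G.charpoly ∣ f ^ N) (k : ℕ) :
    (G ^ k * aeval G f).trace = 0 := by
  have hnil : IsNilpotent (aeval G f) := by
    obtain ⟨q, hq⟩ := hf
    exact ⟨N, by rw [← map_pow, hq, map_mul, Matrix.aeval_self_charpoly, zero_mul]⟩
  have hcomm : Commute (G ^ k) (aeval G f) := by
    have h := Commute.all (X ^ k : K[X]) f
    simpa using h.map (aeval G)
  exact (Matrix.isNilpotent_trace_of_isNilpotent (hcomm.isNilpotent_mul_left hnil)).eq_zero

/-- If `G` has `m` distinct eigenvalues (the characteristic polynomial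
factors as `∏ (X - λᵢ)^{pᵢ}` with the `λᵢ` pairwise distinct and `pᵢ ≥ 1`), then for
`t > m` the determinant of the `t × t` matrix `M_{t,l}(G)` — whose `(i,j)` entry
(`1`-based) is `tr G^{i+j+l-2}`, i.e. `tr G^{i+j+l}` with `0`-based indices — vanishes. -/
theorem det_M_eq_zero_of_lt {K : Type*} [Field K] [IsAlgClosed K] {n m : ℕ}
    (G : Matrix (Fin n) (Fin n) K) (lam : Fin m → K) (p : Fin m → ℕ)
    (hinj : Function.Injective lam) (hp : ∀ i, 1 ≤ p i)
    (hchar : G.charpoly = ∏ i, (X - C (lam i)) ^ p i)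
    (t l : ℕ) (ht : m < t) :
    (Matrix.of fun i j : Fin t => (G ^ (i.1 + j.1 + l)).trace).det = 0 := by
  set f : K[X] := ∏ i, (X - C (lam i)) with hf
  have hmonic : f.Monic := monic_prod_of_monic _ _ fun i _ => monic_X_sub_C (lam i)
  have hdeg : f.natDegree = m := by simp [hf]
  have hdvd : G.charpoly ∣ f ^ ∑ i, p i := by
    rw [hchar, hf, ← Finset.prod_pow]
    exact Finset.prod_dvd_prod_of_dvd _ _ fun i hi =>
      pow_dvd_pow _ (Finset.single_le_sum (fun _ _ => Nat.zero_le _) hi)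
  refine Matrix.exists_mulVec_eq_zero_iff.mp ⟨fun j => f.coeff j, fun h => ?_, ?_⟩
  · have hm : f.coeff m = 0 := congrFun h ⟨m, ht⟩
    rw [← hdeg, hmonic.coeff_natDegree] at hm
    exact one_ne_zero hm
  · ext i
    have htr := trace_pow_mul_aeval_eq_zero G hdvd (i + l)
    rw [aeval_eq_sum_range' (hdeg.trans_lt ht), Finset.mul_sum, Matrix.trace_sum,
      Finset.sum_range] at htr
    rw [Pi.zero_apply, ← htr, Matrix.mulVec, dotProduct]
    refine Finset.sum_congr rfl fun j _ => ?_
    rw [Matrix.of_apply, mul_smul_comm, Matrix.trace_smul, ← pow_add, smul_eq_mul, mul_comm,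
      add_right_comm]
end

section
/- Let K be an algebraically closed field, let G be an n×n matrix over K, and suppose the characteristic polynomial of G factors as ∏_{i=1}^{m} (X − λ_i)^{p_i} where λ_1, …, λ_m ∈ K are pairwise distinct and p_1, …, p_m ≥ 1. Then for every 1 ≤ t ≤ m and every integer l ≥ 0, det M_{t,l}(G) = Σ_T p_{i_1}⋯p_{i_t} · (λ_{i_1}⋯λ_{i_t})^l · (det V(λ_{i_1}, …, λ_{i_t}))², where the sum runs over all t-element subsets T = {i_1 < ⋯ < i_t} of {1, …, m}. -/
open Polynomial Matrix

/-- A form of the Cauchy–Binet formula: the determinant of `A * B` is the sum of the principal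
minors of `B * A` of the same size. -/
theorem Matrix.det_mul_eq_sum_minors {R ι κ : Type*} [CommRing R] [Fintype ι] [DecidableEq ι]
    [Fintype κ] [DecidableEq κ] (A : Matrix ι κ R) (B : Matrix κ ι R) :
    (A * B).det = ∑ s ∈ Finset.univ.powersetCard (Fintype.card ι),
      ((B * A).submatrix (Subtype.val : s → κ) (Subtype.val : s → κ)).det := by
  have hcomm : det (1 + (X : R[X]) • (A * B).map C) = det (1 + (X : R[X]) • (B * A).map C) := by
    simp only [Matrix.map_mul]
    rw [← Matrix.smul_mul, det_one_add_mul_comm, Matrix.mul_smul]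
  rw [← coeff_det_one_add_X_smul_eq_sum_minors, ← hcomm, coeff_det_one_add_X_smul_eq_sum_minors,
    ← Finset.card_univ, Finset.powersetCard_self, Finset.sum_singleton]
  exact (det_submatrix_equiv_self (Equiv.subtypeUnivEquiv Finset.mem_univ) (A * B)).symm

section Charpoly

variable {K ι κ : Type*} [Field K] [Fintype ι] [DecidableEq ι] [Fintype κ]
  {G : Matrix ι ι K} {lam : κ → K} {p : κ → ℕ}

theorem Matrix.card_eq_sum_of_charpoly_eq_prod (hchar : G.charpoly = ∏ i, (X - C (lam i)) ^ p i) :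
    Fintype.card ι = ∑ i, p i := by
  rw [← G.charpoly_natDegree_eq_dim, hchar,
    natDegree_prod_of_monic _ _ fun i _ => (monic_X_sub_C _).pow _]
  simp

theorem Matrix.det_aeval_of_charpoly_eq_prod (hchar : G.charpoly = ∏ i, (X - C (lam i)) ^ p i)
    {q : K[X]} (hq : q.Splits) : (aeval G q).det = ∏ i, q.eval (lam i) ^ p i := by
  have hcard := card_eq_sum_of_charpoly_eq_prod hchar
  have hlin (r : K) : (aeval G (X - C r)).det = ∏ i, (X - C r).eval (lam i) ^ p i := by
    have heval := G.eval_charpoly r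
    rw [hchar, eval_prod] at heval
    have hneg : aeval G (X - C r) = -(scalar ι r - G) := by
      simp [algebraMap_eq_diagonal, Pi.algebraMap_def]
    rw [hneg, det_neg, ← heval, hcard, ← Finset.prod_pow_eq_pow_sum, ← Finset.prod_mul_distrib]
    refine Finset.prod_congr rfl fun i _ => ?_
    simp [← mul_pow]
  have hprod (s : Multiset K) : (aeval G (s.map (X - C ·)).prod).det =
      ∏ i, (s.map (X - C ·)).prod.eval (lam i) ^ p i := by
    induction s using Multiset.induction_on with
    | empty => simp
    | cons r s ih =>
      simp only [Multiset.map_cons, Multiset.prod_cons, map_mul, det_mul, hlin, ih, eval_mul,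
        mul_pow, Finset.prod_mul_distrib]
  rw [hq.eq_prod_roots, map_mul, det_mul, hprod]
  simp [mul_pow, Finset.prod_mul_distrib, Finset.prod_pow_eq_pow_sum, ← hcard,
    algebraMap_eq_diagonal, Pi.algebraMap_def]

theorem Matrix.charpoly_pow_of_charpoly_eq_prod [IsAlgClosed K]
    (hchar : G.charpoly = ∏ i, (X - C (lam i)) ^ p i) (k : ℕ) :
    (G ^ k).charpoly = ∏ i, (X - C (lam i ^ k)) ^ p i := by
  have := IsAlgClosed.instInfinite (K := K)
  refine Polynomial.funext fun x => ?_
  have h := det_aeval_of_charpoly_eq_prod hchar (IsAlgClosed.splits (C x - X ^ k))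
  rw [eval_charpoly, eval_prod]
  simpa [algebraMap_eq_diagonal, Pi.algebraMap_def] using h

theorem Matrix.trace_pow_of_charpoly_eq_prod [IsAlgClosed K]
    (hchar : G.charpoly = ∏ i, (X - C (lam i)) ^ p i) (k : ℕ) :
    (G ^ k).trace = ∑ i, (p i : K) * lam i ^ k := by
  rw [trace_eq_neg_charpoly_nextCoeff, charpoly_pow_of_charpoly_eq_prod hchar,
    Monic.nextCoeff_prod _ _ fun i _ => (monic_X_sub_C _).pow _]
  simp only [(monic_X_sub_C _).nextCoeff_pow, nextCoeff_X_sub_C]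
  simp

end Charpoly

/-- If the characteristic polynomial of `G` factors as
`∏ (X - λᵢ)^{pᵢ}` with the `λᵢ` pairwise distinct and `pᵢ ≥ 1`, then for `1 ≤ t ≤ m`
and `l ≥ 0` the determinant of `M_{t,l}(G)` (whose `(i,j)` entry, `0`-based, is
`tr G^{i+j+l}`) equals the sum, over all `t`-element subsets `T = {i₁ < ⋯ < i_t}` of
`{1, …, m}`, of `p_{i₁}⋯p_{i_t} · (λ_{i₁}⋯λ_{i_t})^l · (det V(λ_{i₁}, …, λ_{i_t}))²`,
where `V` is the Vandermonde matrix.  The increasing enumeration `i₁ < ⋯ < i_t` of `T`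
is `T.orderIsoOfFin`. -/
theorem det_M_eq_sum {K : Type*} [Field K] [IsAlgClosed K] {n m : ℕ}
    (G : Matrix (Fin n) (Fin n) K) (lam : Fin m → K) (p : Fin m → ℕ)
    (hinj : Function.Injective lam) (hp : ∀ i, 1 ≤ p i)
    (hchar : G.charpoly = ∏ i, (X - C (lam i)) ^ p i)
    (t l : ℕ) (ht1 : 1 ≤ t) (htm : t ≤ m) :
    (Matrix.of fun i j : Fin t => (G ^ (i.1 + j.1 + l)).trace).det =
      ∑ T ∈ (Finset.univ.powersetCard t).attach,
        (∏ i ∈ T.1, (p i : K)) * (∏ i ∈ T.1, lam i) ^ l *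
          (Matrix.vandermonde fun k : Fin t =>
            lam ((T.1.orderIsoOfFin (Finset.mem_powersetCard.mp T.2).2 k) : Fin m)).det ^ 2 := by
  have hM : (Matrix.of fun i j : Fin t => (G ^ (i.1 + j.1 + l)).trace) =
      (Matrix.of fun (i : Fin t) r => lam r ^ i.1) *
        (Matrix.of fun r (j : Fin t) => (p r : K) * lam r ^ l * lam r ^ j.1) := by
    ext i j
    simp only [of_apply, mul_apply, trace_pow_of_charpoly_eq_prod hchar]
    exact Finset.sum_congr rfl fun r _ => by ring
  rw [hM, det_mul_eq_sum_minors, Fintype.card_fin, ← Finset.sum_attach]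
  refine Finset.sum_congr rfl fun T _ => ?_
  set e := T.1.orderIsoOfFin (Finset.mem_powersetCard.mp T.2).2
  have hprod (f : Fin m → K) : ∏ k, f (e k) = ∏ i ∈ T.1, f i := by
    rw [← Finset.prod_coe_sort T.1]
    exact e.toEquiv.prod_comp fun i : T.1 => f i
  rw [← det_submatrix_equiv_self e.toEquiv, ← Finset.prod_pow, ← Finset.prod_mul_distrib,
    ← hprod fun i => (p i : K) * lam i ^ l, ← det_diagonal, sq]
  set V := vandermonde fun k => lam (e k)
  rw [← mul_assoc]
  nth_rw 2 [← det_transpose V]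
  rw [← det_mul, ← det_mul]
  congr 1
  ext a b
  rw [mul_apply]
  simp only [diagonal_mul]
  simp [V, mul_apply, vandermonde_apply]
end

section
/- Let K be an algebraically closed field, let G be an n×n matrix over K, and suppose the characteristic polynomial of G factors as ∏_{i=1}^{m} (X − λ_i)^{p_i} where λ_1, …, λ_m ∈ K are pairwise distinct and p_1, …, p_m ≥ 1. Then for every integer l ≥ 0, det M_{m,l}(G) = p_1⋯p_m · (λ_1⋯λ_m)^l · ∏_{1 ≤ i < j ≤ m} (λ_j − λ_i)². -/
open Polynomial Matrix

namespace Matrix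

variable {K ι : Type*} [Field K] [IsAlgClosed K] [Fintype ι] [DecidableEq ι]

/-- Spectral mapping for determinants: `det q(A)` is the product of `q` over the roots of the
characteristic polynomial of `A`. -/
theorem det_aeval_eq_prod_roots_charpoly (A : Matrix ι ι K) (q : K[X]) :
    (aeval A q).det = (A.charpoly.roots.map fun a => q.eval a).prod := by
  have hsplits : A.charpoly.Splits := IsAlgClosed.splits _
  have hcard : Multiset.card A.charpoly.roots = Fintype.card ι := by
    rw [← hsplits.natDegree_eq_card_roots, charpoly_natDegree_eq_dim]
  have hq : q.Splits := IsAlgClosed.splits q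
  induction hq using Submonoid.closure_induction with
  | one => simp
  | mul f g _ _ hf hg => simp [hf, hg, Multiset.prod_map_mul]
  | mem f hf =>
    rcases hf with ⟨c, rfl⟩ | ⟨b, rfl⟩
    · simp [hcard, algebraMap_eq_diagonal]
    · have hneg : aeval A (X + C b) = -(scalar ι (-b) - A) := by
        rw [map_neg, neg_sub, sub_neg_eq_add, map_add, aeval_X, aeval_C]
        rfl
      have heval : A.charpoly.eval (-b) = (A.charpoly.roots.map fun a => -b - a).prod := by
        conv_lhs => rw [hsplits.eq_prod_roots_of_monic A.charpoly_monic]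
        simp [eval_multiset_prod, Multiset.map_map]
      rw [hneg, det_neg, ← eval_charpoly, heval, ← hcard, ← Multiset.card_map (fun a => -b - a),
        ← Multiset.prod_map_neg, Multiset.map_map]
      simp [add_comm]

theorem charpoly_pow_eq_prod_roots (A : Matrix ι ι K) (k : ℕ) :
    (A ^ k).charpoly = (A.charpoly.roots.map fun a => X - C (a ^ k)).prod := by
  refine Polynomial.funext fun x => ?_
  have h := det_aeval_eq_prod_roots_charpoly A (C x - X ^ k)
  rw [eval_charpoly, eval_multiset_prod, Multiset.map_map]
  simpa [algebraMap_eq_diagonal, Pi.algebraMap_def] using h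

theorem trace_pow_eq_sum_roots_charpoly (A : Matrix ι ι K) (k : ℕ) :
    (A ^ k).trace = (A.charpoly.roots.map (· ^ k)).sum := by
  have h := roots_multiset_prod_X_sub_C (A.charpoly.roots.map (· ^ k))
  rw [Multiset.map_map] at h
  rw [trace_eq_sum_roots_charpoly, charpoly_pow_eq_prod_roots]
  exact congrArg Multiset.sum h

theorem trace_pow_eq_sum_of_charpoly_eq_prod {κ : Type*} [Fintype κ] (A : Matrix ι ι K)
    (lam : κ → K) (p : κ → ℕ) (h : A.charpoly = ∏ i, (X - C (lam i)) ^ p i) (k : ℕ) :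
    (A ^ k).trace = ∑ i, (p i : K) * lam i ^ k := by
  have hne : ∏ i, (X - C (lam i)) ^ p i ≠ 0 := h ▸ A.charpoly_monic.ne_zero
  rw [trace_pow_eq_sum_roots_charpoly, h, roots_prod _ _ hne]
  simp [Multiset.map_bind, Multiset.sum_bind, Multiset.map_nsmul, Multiset.sum_nsmul]

end Matrix

/-- If the characteristic polynomial of `G` factors as
`∏ (X - λᵢ)^{pᵢ}` with the `λᵢ` pairwise distinct and `pᵢ ≥ 1`, then for every `l ≥ 0`,
`det M_{m,l}(G) = p₁⋯p_m · (λ₁⋯λ_m)^l · ∏_{i<j} (λⱼ - λᵢ)²`.  Here the `(i,j)` entry of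
`M_{m,l}(G)` (`0`-based) is `tr G^{i+j+l}`. -/
theorem det_M_top {K : Type*} [Field K] [IsAlgClosed K] {n m : ℕ}
    (G : Matrix (Fin n) (Fin n) K) (lam : Fin m → K) (p : Fin m → ℕ)
    (hinj : Function.Injective lam) (hp : ∀ i, 1 ≤ p i)
    (hchar : G.charpoly = ∏ i, (X - C (lam i)) ^ p i)
    (l : ℕ) :
    (Matrix.of fun i j : Fin m => (G ^ (i.1 + j.1 + l)).trace).det =
      (∏ i, (p i : K)) * (∏ i, lam i) ^ l *
        ∏ i, ∏ j ∈ Finset.Ioi i, (lam j - lam i) ^ 2 := by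
  have hfactor : (Matrix.of fun i j : Fin m => (G ^ (i.1 + j.1 + l)).trace) =
      (vandermonde lam)ᵀ * diagonal (fun i => (p i : K) * lam i ^ l) * vandermonde lam := by
    ext i j
    rw [of_apply, trace_pow_eq_sum_of_charpoly_eq_prod G lam p hchar, mul_apply]
    refine Finset.sum_congr rfl fun a _ => ?_
    rw [mul_diagonal, transpose_apply, vandermonde_apply, vandermonde_apply]
    ring
  rw [hfactor, det_mul, det_mul, det_transpose, det_diagonal, det_vandermonde,
    Finset.prod_mul_distrib, Finset.prod_pow]
  simp_rw [Finset.prod_pow]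
  ring
end

section
/- Let K be an algebraically closed field, let G be an n×n matrix over K, and suppose the characteristic polynomial of G factors as ∏_{i=1}^{m} (X − λ_i)^{p_i} where λ_1, …, λ_m ∈ K are pairwise distinct and p_1, …, p_m ≥ 1. Then for every integer l ≥ 0, det M_{m,l}(G) = (λ_1⋯λ_m)^l · det M_{m,0}(G). -/
open Polynomial Matrix

/-- A polynomial vanishing at every root of the split characteristic polynomial of `G` takes a
traceless (indeed nilpotent) value at `G`. -/
theorem trace_aeval_eq_zero_of_eval_eq_zero {K ι κ : Type*} [Field K] [Fintype ι] [DecidableEq ι]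
    [Fintype κ] (G : Matrix ι ι K) (lam : κ → K) (p : κ → ℕ)
    (hchar : G.charpoly = ∏ i, (X - C (lam i)) ^ p i)
    (h : K[X]) (hh : ∀ i, h.eval (lam i) = 0) : (aeval G h).trace = 0 := by
  have hdvd : G.charpoly ∣ h ^ ∑ i, p i := by
    rw [hchar, ← Finset.prod_pow_eq_pow_sum]
    exact Finset.prod_dvd_prod_of_dvd _ _ fun i _ => pow_dvd_pow_of_dvd (dvd_iff_isRoot.2 (hh i)) _
  have hnil : IsNilpotent (aeval G h) := by
    refine ⟨∑ i, p i, ?_⟩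
    obtain ⟨r, hr⟩ := hdvd
    rw [← map_pow, hr, map_mul, aeval_self_charpoly, zero_mul]
  exact (isNilpotent_trace_of_isNilpotent hnil).eq_zero

/-- The power traces of `G` are a fixed linear combination of the powers of its eigenvalues. -/
theorem exists_trace_pow_eq_sum {K ι κ : Type*} [Field K] [Fintype ι] [DecidableEq ι]
    [Fintype κ] (G : Matrix ι ι K) (lam : κ → K) (p : κ → ℕ)
    (hinj : Function.Injective lam) (hchar : G.charpoly = ∏ i, (X - C (lam i)) ^ p i) :
    ∃ c : κ → K, ∀ k : ℕ, (G ^ k).trace = ∑ i, lam i ^ k * c i := by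
  classical
  refine ⟨fun i => (aeval G (Lagrange.basis Finset.univ lam i)).trace, fun k => ?_⟩
  have hzero := trace_aeval_eq_zero_of_eval_eq_zero G lam p hchar
    (X ^ k - Lagrange.interpolate Finset.univ lam fun i => lam i ^ k) fun i => by
      rw [eval_sub, Lagrange.eval_interpolate_at_node _ hinj.injOn (Finset.mem_univ i)]
      simp
  rw [map_sub, trace_sub, sub_eq_zero, map_pow, aeval_X, Lagrange.interpolate_apply, map_sum,
    trace_sum] at hzero
  rw [hzero]
  refine Finset.sum_congr rfl fun i _ => ?_
  rw [← smul_eq_C_mul, map_smul, trace_smul, smul_eq_mul]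

/-- The determinant of a shifted Hankel matrix of weighted power sums. -/
theorem det_hankel_weighted_power_sum {R : Type*} [CommRing R] {m : ℕ} (lam c : Fin m → R)
    (l : ℕ) :
    (Matrix.of fun i j : Fin m => ∑ a, lam a ^ (i.1 + j.1 + l) * c a).det =
      (∏ i, lam i) ^ l * ((∏ i, c i) * (vandermonde lam).det ^ 2) := by
  have hfac : (Matrix.of fun i j : Fin m => ∑ a, lam a ^ (i.1 + j.1 + l) * c a) =
      (vandermonde lam)ᵀ * diagonal (fun a => lam a ^ l * c a) * vandermonde lam := by
    ext i j
    rw [mul_apply]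
    simp only [mul_diagonal, transpose_apply, vandermonde_apply, of_apply]
    exact Finset.sum_congr rfl fun a _ => by ring
  rw [hfac, det_mul, det_mul, det_transpose, det_diagonal, Finset.prod_mul_distrib,
    Finset.prod_pow]
  ring

/-- If the characteristic polynomial of `G` factors as
`∏ (X - λᵢ)^{pᵢ}` with the `λᵢ` pairwise distinct and `pᵢ ≥ 1`, then for every `l ≥ 0`,
`det M_{m,l}(G) = (λ₁⋯λ_m)^l · det M_{m,0}(G)`.  Here the `(i,j)` entry of `M_{t,l}(G)`
(`0`-based) is `tr G^{i+j+l}`. -/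
theorem det_M_l_eq_pow_mul_det_M_zero {K : Type*} [Field K] [IsAlgClosed K] {n m : ℕ}
    (G : Matrix (Fin n) (Fin n) K) (lam : Fin m → K) (p : Fin m → ℕ)
    (hinj : Function.Injective lam) (hp : ∀ i, 1 ≤ p i)
    (hchar : G.charpoly = ∏ i, (X - C (lam i)) ^ p i)
    (l : ℕ) :
    (Matrix.of fun i j : Fin m => (G ^ (i.1 + j.1 + l)).trace).det =
      (∏ i, lam i) ^ l *
        (Matrix.of fun i j : Fin m => (G ^ (i.1 + j.1)).trace).det := by
  obtain ⟨c, hc⟩ := exists_trace_pow_eq_sum G lam p hinj hchar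
  have hzero := det_hankel_weighted_power_sum lam c 0
  simp only [add_zero, pow_zero, one_mul] at hzero
  simp only [hc]
  rw [det_hankel_weighted_power_sum, hzero]
end

section
/- Let G be a real symmetric n×n matrix with exactly m distinct (real) eigenvalues. Then det M_t(G) > 0 for every integer t with 1 ≤ t ≤ m, and det M_t(G) = 0 for every integer t > m. -/
open Polynomial Matrix

/-- The trace of a power of a real Hermitian matrix is the power sum of its eigenvalues. -/
theorem Matrix.IsHermitian.trace_pow_eq_sum_eigenvalues_pow {ι : Type*} [Fintype ι]
    [DecidableEq ι] {A : Matrix ι ι ℝ} (hA : A.IsHermitian) (k : ℕ) :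
    (A ^ k).trace = ∑ i, hA.eigenvalues i ^ k := by
  conv_lhs => rw [hA.spectral_theorem, ← map_pow, Unitary.conjStarAlgAut_apply, trace_mul_comm,
    ← mul_assoc]
  simp [diagonal_pow, trace_diagonal]

/-- Multiplying a rectangular Vandermonde matrix by a vector evaluates the polynomial whose
coefficients are the entries of the vector. -/
theorem Matrix.rectVandermonde_one_mulVec {ι R : Type*} [CommRing R] [DecidableEq R] {t : ℕ}
    (v : ι → R) (c : Fin t → R) :
    rectVandermonde v 1 t *ᵥ c = fun k => (ofFn t c).eval (v k) := by
  ext k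
  simp [mulVec, dotProduct, rectVandermonde_apply, ofFn_eq_sum_monomial, eval_finsetSum, mul_comm]

/-- The matrix of power sums is the Gram matrix of a rectangular Vandermonde matrix. -/
theorem Matrix.conjTranspose_rectVandermonde_one_mul_self {ι : Type*} [Fintype ι] (v : ι → ℝ)
    (t : ℕ) :
    (rectVandermonde v 1 t)ᴴ * rectVandermonde v 1 t =
      Matrix.of fun i j : Fin t => ∑ k, v k ^ (i.1 + j.1) := by
  ext i j
  simp [mul_apply, rectVandermonde_apply, pow_add]

/-- A matrix of power sums of order at most the number of distinct values is positive definite. -/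
theorem Matrix.posDef_powerSum {ι : Type*} [Fintype ι] (v : ι → ℝ) {t : ℕ}
    (ht : t ≤ (Finset.univ.image v).card) :
    (Matrix.of fun i j : Fin t => ∑ k, v k ^ (i.1 + j.1)).PosDef := by
  rw [← conjTranspose_rectVandermonde_one_mul_self]
  refine PosDef.conjTranspose_mul_self _ ((injective_iff_map_eq_zero
    (rectVandermonde v 1 t).mulVecLin).2 fun c hc => ?_)
  rw [mulVecLin_apply, rectVandermonde_one_mulVec] at hc
  refine injective_ofFn t ?_
  rw [map_zero]
  refine eq_zero_of_degree_lt_of_eval_finset_eq_zero (Finset.univ.image v)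
    ((ofFn_degree_lt c).trans_le (by exact_mod_cast ht)) fun x hx => ?_
  obtain ⟨k, -, rfl⟩ := Finset.mem_image.1 hx
  exact congrFun hc k

/-- A matrix of power sums of order exceeding the number of distinct values is singular. -/
theorem Matrix.det_powerSum_eq_zero {ι : Type*} [Fintype ι] (v : ι → ℝ) {t : ℕ}
    (ht : (Finset.univ.image v).card < t) :
    (Matrix.of fun i j : Fin t => ∑ k, v k ^ (i.1 + j.1)).det = 0 := by
  set p : ℝ[X] := ∏ x ∈ Finset.univ.image v, (X - C x) with hp
  have hp0 : p ≠ 0 := (monic_prod_of_monic _ _ fun x _ => monic_X_sub_C x).ne_zero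
  have hofFn : ofFn t (toFn t p) = p :=
    ofFn_comp_toFn_eq_id_of_natDegree_lt (by rwa [hp, natDegree_finsetProd_X_sub_C_eq_card])
  refine exists_mulVec_eq_zero_iff.1 ⟨toFn t p, fun h => hp0 (by rw [← hofFn, h, map_zero]), ?_⟩
  have heval : (fun k => p.eval (v k)) = 0 := by
    ext k
    rw [hp, eval_prod]
    exact Finset.prod_eq_zero (Finset.mem_image_of_mem v (Finset.mem_univ k)) (by simp)
  rw [← conjTranspose_rectVandermonde_one_mul_self, ← mulVec_mulVec, rectVandermonde_one_mulVec,
    hofFn, heval, mulVec_zero]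

/-- Let `G` be a real symmetric `n × n` matrix with exactly `m`
distinct (real) eigenvalues, i.e. the characteristic polynomial of `G` has exactly `m`
distinct roots.  Then `det M_t(G) > 0` for `1 ≤ t ≤ m` and `det M_t(G) = 0` for `t > m`,
where the `(i,j)` entry of `M_t(G)` (`0`-based) is `tr G^{i+j}`. -/
theorem det_M_pos_and_zero_of_symm {n m : ℕ} (G : Matrix (Fin n) (Fin n) ℝ)
    (hG : G.IsSymm) (hm : G.charpoly.roots.toFinset.card = m) :
    (∀ t : ℕ, 1 ≤ t → t ≤ m →
      0 < (Matrix.of fun i j : Fin t => (G ^ (i.1 + j.1)).trace).det) ∧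
    (∀ t : ℕ, m < t →
      (Matrix.of fun i j : Fin t => (G ^ (i.1 + j.1)).trace).det = 0) := by
  have hH : G.IsHermitian := by rwa [Matrix.IsHermitian, conjTranspose_eq_transpose_of_trivial]
  have hcard : (Finset.univ.image hH.eigenvalues).card = m := by
    rw [← hm, hH.roots_charpoly_eq_eigenvalues]
    rfl
  simp only [hH.trace_pow_eq_sum_eigenvalues_pow]
  exact ⟨fun t _ ht => (posDef_powerSum _ (ht.trans_eq hcard.symm)).det_pos,
    fun t ht => det_powerSum_eq_zero _ (hcard.trans_lt ht)⟩
end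

section
/- Let K be an algebraically closed field of characteristic zero and let G be an n×n matrix over K. The number of distinct eigenvalues of G equals m if and only if det M_m(G) ≠ 0 and det M_t(G) = 0 for every integer t > m. -/
open Polynomial Matrix

namespace Matrix

variable {ι K : Type*} [Fintype ι] [DecidableEq ι] [Field K] [IsAlgClosed K]

/-- The determinant of `q(G)` is the product of the values of `q` at the eigenvalues of `G`. -/
theorem det_aeval_eq_prod_map_roots_charpoly (G : Matrix ι ι K) (q : K[X]) :
    (aeval G q).det = (G.charpoly.roots.map fun x => q.eval x).prod := by
  have hsplits := IsAlgClosed.splits G.charpoly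
  have hcard : Multiset.card G.charpoly.roots = Fintype.card ι := by
    rw [← hsplits.natDegree_eq_card_roots, charpoly_natDegree_eq_dim]
  induction IsAlgClosed.splits q using Submonoid.closure_induction with
  | mem p hp =>
    rcases hp with ⟨a, rfl⟩ | ⟨a, rfl⟩
    · simp [hcard, algebraMap_eq_diagonal, Pi.algebraMap_def]
    · have heval : G.charpoly.eval (-a) = (G.charpoly.roots.map fun x => -a - x).prod :=
        hsplits.eval_eq_prod_roots_of_monic G.charpoly_monic (-a)
      rw [eval_charpoly] at heval
      have hmat : aeval G (X + C a) = -(scalar ι (-a) - G) := by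
        rw [map_neg, neg_sub, sub_neg_eq_add]
        simp [algebraMap_eq_diagonal, Pi.algebraMap_def]
      rw [hmat, det_neg, heval, ← hcard, ← Multiset.card_map (fun x => -a - x),
        ← Multiset.prod_map_neg, Multiset.map_map]
      simp [add_comm]
  | one => simp
  | mul p q _ _ hp hq => simp [hp, hq, Multiset.prod_map_mul]

/-- The eigenvalues of `G ^ k`, with multiplicity, are the `k`-th powers of those of `G`. -/
theorem roots_charpoly_pow (G : Matrix ι ι K) (k : ℕ) :
    (G ^ k).charpoly.roots = G.charpoly.roots.map (· ^ k) := by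
  have hcharpoly : (G ^ k).charpoly =
      ((G.charpoly.roots.map (· ^ k)).map fun a => X - C a).prod := by
    refine Polynomial.funext fun r => ?_
    have hmat : scalar ι r - G ^ k = aeval G (C r - X ^ k) := by
      simp [algebraMap_eq_diagonal, Pi.algebraMap_def]
    rw [eval_charpoly, hmat, det_aeval_eq_prod_map_roots_charpoly, eval_multiset_prod]
    simp [Multiset.map_map]
  rw [hcharpoly, roots_multiset_prod_X_sub_C]

theorem trace_pow_eq_sum_count_mul_pow [DecidableEq K] (G : Matrix ι ι K) (k : ℕ) :
    (G ^ k).trace =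
      ∑ x ∈ G.charpoly.roots.toFinset, (G.charpoly.roots.count x : K) * x ^ k := by
  rw [trace_eq_sum_roots_charpoly, roots_charpoly_pow, Finset.sum_multiset_map_count]
  simp

/-- The Hankel matrix of traces factors through the eigenvalues of `G`. -/
theorem hankel_trace_eq_mul [DecidableEq K] (G : Matrix ι ι K) {s : ℕ}
    (e : G.charpoly.roots.toFinset ≃ Fin s) (t : ℕ) :
    (Matrix.of fun i j : Fin t => (G ^ (i.1 + j.1)).trace) =
      (Matrix.of fun (a : Fin s) (i : Fin t) => (e.symm a : K) ^ i.1)ᵀ *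
        (diagonal (fun a => (G.charpoly.roots.count (e.symm a : K) : K)) *
          Matrix.of fun (a : Fin s) (i : Fin t) => (e.symm a : K) ^ i.1) := by
  ext i j
  rw [of_apply, trace_pow_eq_sum_count_mul_pow, ← Finset.sum_coe_sort, ← e.symm.sum_comp,
    mul_apply]
  refine Finset.sum_congr rfl fun a _ => ?_
  simp only [transpose_apply, of_apply, diagonal_mul, pow_add]
  ring

theorem det_hankel_trace_ne_zero [CharZero K] [DecidableEq K] (G : Matrix ι ι K) {s : ℕ}
    (hs : G.charpoly.roots.toFinset.card = s) :
    (Matrix.of fun i j : Fin s => (G ^ (i.1 + j.1)).trace).det ≠ 0 := by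
  let e := Finset.equivFinOfCardEq hs
  have hvandermonde : (Matrix.of fun a i : Fin s => (e.symm a : K) ^ i.1).det ≠ 0 :=
    det_vandermonde_ne_zero_iff.mpr (Subtype.val_injective.comp e.symm.injective)
  rw [hankel_trace_eq_mul G e, det_mul, det_mul, det_transpose, det_diagonal]
  refine mul_ne_zero hvandermonde (mul_ne_zero ?_ hvandermonde)
  refine Finset.prod_ne_zero_iff.mpr fun a _ => Nat.cast_ne_zero.mpr ?_
  exact Multiset.count_ne_zero.mpr (Multiset.mem_toFinset.mp (e.symm a).2)

theorem det_hankel_trace_eq_zero [DecidableEq K] (G : Matrix ι ι K) {t : ℕ}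
    (ht : G.charpoly.roots.toFinset.card < t) :
    (Matrix.of fun i j : Fin t => (G ^ (i.1 + j.1)).trace).det = 0 := by
  by_contra hdet
  have hrank := rank_of_isUnit _ ((isUnit_iff_isUnit_det _).mpr (isUnit_iff_ne_zero.mpr hdet))
  rw [hankel_trace_eq_mul G (Finset.equivFinOfCardEq rfl), Fintype.card_fin] at hrank
  have hle := (rank_mul_le_left _ _).trans (rank_le_width _) |>.trans_eq' hrank
  exact absurd hle ht.not_ge

end Matrix

/-- Over an algebraically closed field of characteristic zero, the
number of distinct eigenvalues of `G` (the number of distinct roots of its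
characteristic polynomial) equals `m` iff `det M_m(G) ≠ 0` and `det M_t(G) = 0` for all
`t > m`, where the `(i,j)` entry of `M_t(G)` (`0`-based) is `tr G^{i+j}`. -/
theorem spectral_size_iff {K : Type*} [Field K] [IsAlgClosed K] [CharZero K] [DecidableEq K] {n : ℕ}
    (G : Matrix (Fin n) (Fin n) K) (m : ℕ) :
    G.charpoly.roots.toFinset.card = m ↔
      ((Matrix.of fun i j : Fin m => (G ^ (i.1 + j.1)).trace).det ≠ 0 ∧
        ∀ t : ℕ, m < t →
          (Matrix.of fun i j : Fin t => (G ^ (i.1 + j.1)).trace).det = 0) := by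
  constructor
  · rintro rfl
    exact ⟨det_hankel_trace_ne_zero G rfl, fun t ht => det_hankel_trace_eq_zero G ht⟩
  · rintro ⟨hne, hzero⟩
    refine le_antisymm ?_ ?_
    · exact not_lt.mp fun h => det_hankel_trace_ne_zero G rfl (hzero _ h)
    · exact not_lt.mp fun h => hne (det_hankel_trace_eq_zero G h)
end

section
/- Let K be an algebraically closed field of characteristic zero, let G be an n×n matrix over K with exactly m distinct eigenvalues, and let l ≥ 1 be an integer. Then det M_{m,l}(G) = 0 if and only if G is degenerate, i.e. det G = 0. -/
open Polynomial Matrix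

namespace Matrix

variable {n K : Type*} [Fintype n] [DecidableEq n] [Field K] [IsAlgClosed K]

/-- The determinant of `G - b` is the product of `a - b` over the eigenvalues `a` of `G`. -/
lemma det_aeval_X_sub_C (G : Matrix n n K) (b : K) :
    (aeval G (X - C b)).det = (G.charpoly.roots.map fun a => a - b).prod := by
  have h : aeval G (X - C b) = -(scalar n b - G) := by
    simp [algebraMap_eq_diagonal, Pi.algebraMap_def]
  rw [h, det_neg, ← eval_charpoly, ← G.charpoly_natDegree_eq_dim,
    (IsAlgClosed.splits G.charpoly).natDegree_eq_card_roots]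
  nth_rw 2 [(IsAlgClosed.splits G.charpoly).eq_prod_roots_of_monic G.charpoly_monic]
  have hmap : (G.charpoly.roots.map (X - C ·)).map (eval b) =
      G.charpoly.roots.map fun a => b - a := by
    simp
  rw [eval_multiset_prod, hmap, ← Multiset.card_map (fun a => b - a),
    ← Multiset.prod_map_neg, Multiset.map_map]
  simp

/-- The determinant of `q(G)` is the product of `q(a)` over the eigenvalues `a` of `G`. -/
lemma det_aeval_eq_prod_roots (G : Matrix n n K) (q : K[X]) :
    (aeval G q).det = (G.charpoly.roots.map fun a => q.eval a).prod := by
  induction IsAlgClosed.splits q using Submonoid.closure_induction with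
  | mem p hp =>
    obtain ⟨c, rfl⟩ | ⟨b, rfl⟩ := hp
    · simp [algebraMap_eq_diagonal, ← G.charpoly_natDegree_eq_dim,
        (IsAlgClosed.splits G.charpoly).natDegree_eq_card_roots]
    · simpa using det_aeval_X_sub_C G (-b)
  | one => simp
  | mul p r _ _ hp hr => simp [det_mul, hp, hr, Multiset.prod_map_mul]

/-- The eigenvalues of `q(G)`, with multiplicity, are the `q(a)` for `a` an eigenvalue of `G`. -/
lemma roots_charpoly_aeval (G : Matrix n n K) (q : K[X]) :
    (aeval G q).charpoly.roots = G.charpoly.roots.map fun a => q.eval a := by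
  have : Infinite K := IsAlgClosed.instInfinite
  suffices h : (aeval G q).charpoly =
      ((G.charpoly.roots.map fun a => q.eval a).map fun a => X - C a).prod by
    rw [h, roots_multiset_prod_X_sub_C]
  refine Polynomial.funext fun x => ?_
  have h := det_aeval_eq_prod_roots G (C x - q)
  rw [eval_charpoly, eval_multiset_prod]
  simpa [algebraMap_eq_diagonal, Pi.algebraMap_def, Function.comp_def] using h

/-- The trace of `G ^ k` is the `k`-th power sum of the eigenvalues of `G`. -/
lemma trace_pow_eq_sum_roots (G : Matrix n n K) (k : ℕ) :
    (G ^ k).trace = (G.charpoly.roots.map fun a => a ^ k).sum := by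
  have h := roots_charpoly_aeval G (X ^ k)
  simp only [map_pow, aeval_X, eval_pow, eval_X] at h
  rw [trace_eq_sum_roots_charpoly, h]

end Matrix

/-- A Hankel matrix of weighted power sums factors through a Vandermonde matrix. -/
lemma Matrix.det_hankel_weighted_power_sums {R : Type*} [CommRing R] {m : ℕ}
    (c v : Fin m → R) (l : ℕ) :
    (Matrix.of fun i j : Fin m => ∑ k, c k * v k ^ (i.1 + j.1 + l)).det =
      (vandermonde v).det ^ 2 * ∏ k, c k * v k ^ l := by
  have h : (Matrix.of fun i j : Fin m => ∑ k, c k * v k ^ (i.1 + j.1 + l)) =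
      (vandermonde v)ᵀ * diagonal (fun k => c k * v k ^ l) * vandermonde v := by
    ext i j
    simp only [of_apply, mul_apply (N := vandermonde v), mul_diagonal, transpose_apply,
      vandermonde_apply]
    exact Finset.sum_congr rfl fun k _ => by ring
  rw [h, det_mul, det_mul, det_transpose, det_diagonal]
  ring

/-- Over an algebraically closed field of characteristic zero, if `G`
has exactly `m` distinct eigenvalues (distinct roots of its characteristic polynomial)
and `l ≥ 1`, then `det M_{m,l}(G) = 0` iff `G` is degenerate, i.e. `det G = 0`.
Here the `(i,j)` entry of `M_{m,l}(G)` (`0`-based) is `tr G^{i+j+l}`. -/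
theorem det_M_l_eq_zero_iff_det_eq_zero {K : Type*} [Field K] [IsAlgClosed K]
    [CharZero K] [DecidableEq K] {n m : ℕ} (G : Matrix (Fin n) (Fin n) K)
    (hm : G.charpoly.roots.toFinset.card = m) (l : ℕ) (hl : 1 ≤ l) :
    (Matrix.of fun i j : Fin m => (G ^ (i.1 + j.1 + l)).trace).det = 0 ↔ G.det = 0 := by
  let e := (Finset.equivFinOfCardEq hm).symm
  let v : Fin m → K := fun k => e k
  have hv : Function.Injective v := Subtype.val_injective.comp e.injective
  have hmem (k : Fin m) : v k ∈ G.charpoly.roots := Multiset.mem_toFinset.mp (e k).2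
  have htrace (p : ℕ) :
      (G ^ p).trace = ∑ k, (G.charpoly.roots.count (v k) : K) * v k ^ p := by
    rw [trace_pow_eq_sum_roots, Finset.sum_multiset_map_count, ← Finset.sum_coe_sort,
      ← e.sum_comp]
    simp [v]
  have hcount (k : Fin m) : (G.charpoly.roots.count (v k) : K) ≠ 0 :=
    Nat.cast_ne_zero.mpr (Multiset.count_ne_zero.mpr (hmem k))
  simp only [htrace]
  rw [det_hankel_weighted_power_sums, det_eq_prod_roots_charpoly G, Multiset.prod_eq_zero_iff,
    mul_eq_zero_iff_left (pow_ne_zero 2 (det_vandermonde_ne_zero_iff.mpr hv)),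
    Finset.prod_eq_zero_iff]
  constructor
  · rintro ⟨k, -, hk⟩
    have h0 := eq_zero_of_pow_eq_zero ((mul_eq_zero.mp hk).resolve_left (hcount k))
    exact h0 ▸ hmem k
  · intro h0
    refine ⟨e.symm ⟨0, Multiset.mem_toFinset.mpr h0⟩, Finset.mem_univ _, ?_⟩
    simp [v, Nat.one_le_iff_ne_zero.mp hl]
end

section
/- Let K be an algebraically closed field, let G be an n×n matrix over K, and let λ ∈ K. Then for every integer t ≥ 1, det M_t(λI − G) = det M_t(G), where I is the n×n identity matrix. -/
open Polynomial Matrix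

/-- The Gram matrix of a family of polynomials `p i` of degree less than `t` under the trace form
of `G` is congruent to the matrix of power traces, via the coefficient matrix of `p`. -/
theorem gram_trace_aeval_eq_mul {R : Type*} [CommRing R] {m : Type*} [Fintype m] [DecidableEq m]
    (G : Matrix m m R) {t : ℕ} (p : Fin t → R[X]) (hp : ∀ i, (p i).natDegree < t) :
    (Matrix.of fun i j : Fin t => (aeval G (p i) * aeval G (p j)).trace) =
      (Matrix.of fun i k : Fin t => (p i).coeff k) *
        (Matrix.of fun i j : Fin t => (G ^ (i.1 + j.1)).trace) *
        (Matrix.of fun i k : Fin t => (p i).coeff k)ᵀ := by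
  have expand (i : Fin t) : aeval G (p i) = ∑ k : Fin t, (p i).coeff k • G ^ k.1 := by
    rw [aeval_eq_sum_range' (hp i), Finset.sum_range]
  ext i j
  simp only [of_apply, mul_apply, transpose_apply, expand, Finset.sum_mul, Finset.mul_sum,
    trace_sum, smul_mul_assoc, mul_smul_comm, trace_smul, smul_eq_mul, ← pow_add]
  refine Finset.sum_congr rfl fun k _ => Finset.sum_congr rfl fun l _ => ?_
  ring

/-- The coefficient matrix of the powers of `a - X` is lower triangular with diagonal `(-1) ^ i`. -/
theorem det_coeff_C_sub_X_pow {R : Type*} [CommRing R] (a : R) (t : ℕ) :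
    (Matrix.of fun i k : Fin t => ((C a - X) ^ i.1 : R[X]).coeff k).det =
      ∏ i : Fin t, (-1 : R) ^ i.1 := by
  have hdeg : (C a - X : R[X]).natDegree ≤ 1 := by compute_degree
  rw [det_of_isLowerTriangular]
  · refine Finset.prod_congr rfl fun i _ => ?_
    have h := coeff_pow_of_natDegree_le (m := i.1) hdeg
    simpa using h
  · intro i k hik
    refine coeff_eq_zero_of_natDegree_lt ((natDegree_pow_le_of_le i.1 hdeg).trans_lt ?_)
    simpa using hik

/-- For an `n × n` matrix `G` over an algebraically closed field `K`
and any `λ ∈ K`, `det M_t(λI - G) = det M_t(G)` for every `t ≥ 1`, where the `(i,j)`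
entry of `M_t(A)` (`0`-based) is `tr A^{i+j}`. -/
theorem det_M_shift_invariant {K : Type*} [Field K] [IsAlgClosed K] {n : ℕ}
    (G : Matrix (Fin n) (Fin n) K) (lam : K) (t : ℕ) (ht : 1 ≤ t) :
    (Matrix.of fun i j : Fin t =>
        ((lam • (1 : Matrix (Fin n) (Fin n) K) - G) ^ (i.1 + j.1)).trace).det =
      (Matrix.of fun i j : Fin t => (G ^ (i.1 + j.1)).trace).det := by
  have hdeg : (C lam - X : K[X]).natDegree ≤ 1 := by compute_degree
  have h := gram_trace_aeval_eq_mul G (fun i : Fin t => (C lam - X) ^ i.1) fun i =>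
    (natDegree_pow_le_of_le i.1 hdeg).trans_lt (by simp)
  simp only [map_pow, map_sub, aeval_C, aeval_X, ← pow_add, Algebra.algebraMap_eq_smul_one] at h
  rw [h, det_mul, det_mul, det_transpose, det_coeff_C_sub_X_pow, mul_right_comm,
    ← Finset.prod_mul_distrib]
  simp [← mul_pow]
end
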